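/- Let n ≥ 8 be divisible by 4, let H be a saturated orthogonal array OA(n,n−1,2,2), and let one fixed column of H be removed. Then the sum of J₄(S)² over all unordered 4-subsets S of the remaining n−2 columns equals n²(n−2)(n−4)(n−5)/24. -/

import Mathlib

open Finset

/-!
Expanding the square, `∑ J₄(S)²` is the sum over pairs of rows `(i, i')` of the fourth elementary
symmetric function of the products `H i j * H i' j`, `j` running over the remaining columns. Since
these products square to `1`, this function is a polynomial in their number `n - 2` and their sum.
Bordering a saturated array by a column of ones gives a Hadamard matrix, and the orthogonality of
its rows yields the sum: it is `-1 - H i c * H i' c` for `i ≠ i'`, with `c` the deleted column,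
and `n - 2` for `i = i'`. Since column `c` is balanced, its contribution to the sum over `i'` is
the same for every `i`.
-/

section ElementarySymmetric

variable {R : Type*}

lemma multiset_esymm_zero [CommSemiring R] (m : Multiset R) : m.esymm 0 = 1 := by
  simp [Multiset.esymm]

lemma multiset_esymm_one [CommSemiring R] (m : Multiset R) : m.esymm 1 = m.sum := by
  simp [Multiset.esymm, Multiset.powersetCard_one]

lemma multiset_esymm_cons_succ [CommSemiring R] (a : R) (m : Multiset R) (k : ℕ) :
    (a ::ₘ m).esymm (k + 1) = m.esymm (k + 1) + a * m.esymm k := by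
  simp [Multiset.esymm, Multiset.powersetCard_cons, Multiset.sum_map_mul_left]

variable [CommRing R]

-- Multiplying a product of `k + 1` members of `m` by a member outside it gives each product of
-- `k + 2` members `k + 2` times; multiplying by a member inside it cancels that member, giving each
-- product of `k` members `card m - k` times.
lemma sum_mul_esymm_succ_of_sq_eq_one (m : Multiset R) (hm : ∀ x ∈ m, x ^ 2 = 1) (k : ℕ) :
    m.sum * m.esymm (k + 1) =
      (k + 2) * m.esymm (k + 2) + (m.card - k) * m.esymm k := by
  induction m using Multiset.induction_on generalizing k with
  | empty =>
    have hsucc (l : ℕ) : (0 : Multiset R).esymm (l + 1) = 0 := by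
      simp [Multiset.esymm, Multiset.powersetCard_zero_right]
    cases k <;> simp [hsucc]
  | cons a m ih =>
    have ha : a ^ 2 = 1 := hm a (Multiset.mem_cons_self a m)
    replace ih := ih fun x hx => hm x (Multiset.mem_cons_of_mem hx)
    cases k with
    | zero =>
      have h := ih 0
      simp only [multiset_esymm_cons_succ, multiset_esymm_zero, multiset_esymm_one,
        Multiset.sum_cons, Multiset.card_cons, zero_add] at h ⊢
      push_cast at h ⊢
      linear_combination h + ha
    | succ k =>
      have h₀ := ih k
      have h₁ := ih (k + 1)
      simp only [multiset_esymm_cons_succ, Multiset.sum_cons, Multiset.card_cons]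
      push_cast at h₁ ⊢
      linear_combination h₁ + a * h₀ + m.esymm (k + 1) * ha

lemma esymm_four_of_sq_eq_one (m : Multiset R) (hm : ∀ x ∈ m, x ^ 2 = 1) :
    24 * m.esymm 4 =
      m.sum ^ 4 - (6 * m.card - 8) * m.sum ^ 2 + 3 * m.card * (m.card - 2) := by
  have e₂ := sum_mul_esymm_succ_of_sq_eq_one m hm 0
  have e₃ := sum_mul_esymm_succ_of_sq_eq_one m hm 1
  have e₄ := sum_mul_esymm_succ_of_sq_eq_one m hm 2
  simp only [zero_add, Nat.reduceAdd, multiset_esymm_zero, multiset_esymm_one] at e₂ e₃ e₄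
  push_cast at e₂ e₃ e₄
  linear_combination -6 * e₄ - 2 * m.sum * e₃ - (m.sum ^ 2 - 3 * m.card + 6) * e₂

end ElementarySymmetric

section MatrixCommutation

variable {R ι κ : Type*} [CommRing R] [Fintype ι] [Fintype κ] [DecidableEq ι] [DecidableEq κ]

lemma mul_eq_smul_one_symm {A B : Matrix ι ι R} {r : R} (hr : IsRegular r)
    (h : A * B = r • 1) : B * A = r • 1 := by
  have hdet : IsRegular (A.det * B.det) := by
    rw [← Matrix.det_mul, h, Matrix.det_smul, Matrix.det_one, mul_one]
    exact hr.pow _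
  have hB : IsRegular B :=
    Matrix.isRegular_of_isLeftRegular_det (isRegular_mul_iff.mp hdet).2.left
  apply hB.right
  change B * A * B = r • 1 * B
  rw [mul_assoc, h, mul_smul_comm, smul_mul_assoc, mul_one, one_mul]

lemma mul_eq_smul_one_symm_of_card_eq {A : Matrix ι κ R} {B : Matrix κ ι R} {r : R}
    (hcard : Fintype.card ι = Fintype.card κ) (hr : IsRegular r) (h : A * B = r • 1) :
    B * A = r • 1 := by
  let e : ι ≃ κ := Fintype.equivOfCardEq hcard
  have hsub : A.submatrix id e * B.submatrix e id = r • 1 := by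
    rw [Matrix.submatrix_mul_equiv, h, Matrix.submatrix_id_id]
  apply (Matrix.reindex e.symm e.symm).injective
  simpa [Matrix.submatrix_smul, Matrix.submatrix_mul B A e id e Function.bijective_id] using
    mul_eq_smul_one_symm hr hsub

end MatrixCommutation

section JCharacteristic

variable {R ι κ : Type*} [CommSemiring R] [Fintype ι]

/-- The `J`-characteristic `J_s(c_{j₁}, …, c_{j_s})` of a design `H`, where `S = {j₁, …, j_s}` is
the set of the chosen columns. -/
def jChar (H : Matrix ι κ R) (S : Finset κ) : R := ∑ i, ∏ j ∈ S, H i j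

lemma sum_jChar_sq (H : Matrix ι κ R) (s : Finset κ) (k : ℕ) :
    ∑ S ∈ s.powersetCard k, jChar H S ^ 2 =
      ∑ i, ∑ i', (s.val.map (H i * H i')).esymm k := by
  simp_rw [esymm_map_val, jChar, sq, sum_mul_sum, Pi.mul_apply, prod_mul_distrib]
  rw [sum_comm]
  exact sum_congr rfl fun i _ => sum_comm

end JCharacteristic

/-- A saturated two-level orthogonal array `OA(n, n - 1, 2, 2)`, with rows indexed by `ι` and
columns by `κ`. The levels `±1` are encoded by `x ^ 2 = 1`; over a domain of characteristic zero
this is the usual notion, while in general the equations only hold in `R`. -/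
structure IsSaturatedOA {R ι κ : Type*} [CommRing R] [Fintype ι] [Fintype κ]
    (H : Matrix ι κ R) : Prop where
  card_rows : Fintype.card ι = Fintype.card κ + 1
  sq_eq_one : ∀ i j, H i j ^ 2 = 1
  sum_col_eq_zero : ∀ j, ∑ i, H i j = 0
  sum_col_mul_col_eq_zero : ∀ j k, j ≠ k → ∑ i, H i j * H i k = 0

namespace IsSaturatedOA

open Matrix

variable {R ι κ : Type*} [CommRing R] [Fintype ι] [Fintype κ] {H : Matrix ι κ R}

lemma transpose_mul_self [DecidableEq κ] (hH : IsSaturatedOA H) :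
    Hᵀ * H = (Fintype.card ι : R) • 1 := by
  ext j k
  rcases eq_or_ne j k with rfl | hjk
  · simp [Matrix.mul_apply, ← sq, hH.sq_eq_one]
  · simp [Matrix.mul_apply, hH.sum_col_mul_col_eq_zero j k hjk, hjk]

lemma sum_row_mul_row_eq_neg_one (hH : IsSaturatedOA H)
    (hn : IsRegular (Fintype.card ι : R)) {i i' : ι} (hi : i ≠ i') :
    ∑ j, H i j * H i' j = -1 := by
  classical
  let ones : Matrix ι Unit R := of fun _ _ => 1
  have hones : onesᵀ * ones = (Fintype.card ι : R) • 1 := by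
    ext; simp [ones, Matrix.mul_apply]
  have honesH : onesᵀ * H = 0 := by
    ext; simp [ones, Matrix.mul_apply, hH.sum_col_eq_zero]
  have hHones : Hᵀ * ones = 0 := by
    ext; simp [ones, Matrix.mul_apply, hH.sum_col_eq_zero]
  have hgram : (fromCols ones H)ᵀ * fromCols ones H = (Fintype.card ι : R) • 1 := by
    rw [transpose_fromCols, fromRows_mul_fromCols, hones, honesH, hHones, hH.transpose_mul_self,
      ← fromBlocks_one, fromBlocks_smul, smul_zero, smul_zero]
  have hcard : Fintype.card (Unit ⊕ κ) = Fintype.card ι := by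
    simp [hH.card_rows, add_comm]
  have hrows := mul_eq_smul_one_symm_of_card_eq hcard hn hgram
  rw [transpose_fromCols, fromCols_mul_fromRows] at hrows
  have hentry : 1 + ∑ j, H i j * H i' j = 0 := by
    simpa [ones, Matrix.mul_apply, hi] using congr_fun₂ hrows i i'
  linear_combination hentry

variable [DecidableEq κ]

lemma cast_card_erase (hH : IsSaturatedOA H) (c : κ) :
    (#(univ.erase c) : R) = Fintype.card ι - 2 := by
  have hcard : #(univ.erase c) + 2 = Fintype.card ι := by
    rw [hH.card_rows, ← card_univ, ← card_erase_add_one (mem_univ c)]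
  rw [← hcard]
  push_cast
  ring

lemma esymm_four_erase (hH : IsSaturatedOA H) (c : κ) (i i' : ι) :
    24 * ((univ.erase c).val.map (H i * H i')).esymm 4 =
      (∑ j ∈ univ.erase c, H i j * H i' j) ^ 4
        - (6 * Fintype.card ι - 20) * (∑ j ∈ univ.erase c, H i j * H i' j) ^ 2
        + 3 * (Fintype.card ι - 2) * (Fintype.card ι - 4) := by
  have hsq : ∀ x ∈ (univ.erase c).val.map (H i * H i'), x ^ 2 = 1 := by
    simp [mul_pow, hH.sq_eq_one]
  have hsum : ((univ.erase c).val.map (H i * H i')).sum = ∑ j ∈ univ.erase c, H i j * H i' j := rfl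
  rw [esymm_four_of_sq_eq_one _ hsq, hsum, Multiset.card_map, card_val, hH.cast_card_erase]
  ring

lemma esymm_four_erase_self (hH : IsSaturatedOA H) (c : κ) (i : ι) :
    24 * ((univ.erase c).val.map (H i * H i)).esymm 4 =
      ((Fintype.card ι : R) - 2) * (Fintype.card ι - 3) * (Fintype.card ι - 4)
        * (Fintype.card ι - 5) := by
  have hsum : ∑ j ∈ univ.erase c, H i j * H i j = Fintype.card ι - 2 := by
    simp_rw [← sq, hH.sq_eq_one, sum_const, nsmul_one, hH.cast_card_erase]
  rw [hH.esymm_four_erase, hsum]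
  ring

lemma esymm_four_erase_of_ne (hH : IsSaturatedOA H) (hn : IsRegular (Fintype.card ι : R))
    (c : κ) {i i' : ι} (hi : i ≠ i') :
    24 * ((univ.erase c).val.map (H i * H i')).esymm 4 =
      3 * (Fintype.card ι - 4) * (Fintype.card ι - 6 - 4 * (H i c * H i' c)) := by
  have hsum : ∑ j ∈ univ.erase c, H i j * H i' j = -1 - H i c * H i' c := by
    rw [sum_erase_eq_sub (mem_univ c), hH.sum_row_mul_row_eq_neg_one hn hi]
  have hc : (H i c * H i' c) ^ 2 = 1 := by
    rw [mul_pow, hH.sq_eq_one, hH.sq_eq_one, one_mul]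
  have hpow₂ : (-1 - H i c * H i' c) ^ 2 = 2 * (1 + H i c * H i' c) := by
    linear_combination hc
  have hpow₄ : (-1 - H i c * H i' c) ^ 4 = 8 * (1 + H i c * H i' c) := by
    rw [show 4 = 2 * 2 from rfl, pow_mul, hpow₂]
    linear_combination 4 * hc
  rw [hH.esymm_four_erase, hsum, hpow₂, hpow₄]
  ring

lemma sum_esymm_four_erase (hH : IsSaturatedOA H) (hn : IsRegular (Fintype.card ι : R))
    (c : κ) (i : ι) :
    24 * ∑ i', ((univ.erase c).val.map (H i * H i')).esymm 4 =
      (Fintype.card ι : R) * (Fintype.card ι - 2) * (Fintype.card ι - 4)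
        * (Fintype.card ι - 5) := by
  classical
  have hcol : ∑ i' ∈ univ.erase i, H i c * H i' c = -1 := by
    rw [sum_erase_eq_sub (mem_univ i), ← mul_sum, hH.sum_col_eq_zero, ← sq, hH.sq_eq_one]
    ring
  have hcard : (#(univ.erase i) : R) = Fintype.card ι - 1 := by
    rw [cast_card_erase_of_mem (mem_univ i), card_univ]
  have hoff : 24 * ∑ i' ∈ univ.erase i, ((univ.erase c).val.map (H i * H i')).esymm 4 =
      3 * (Fintype.card ι - 4) * ((Fintype.card ι - 1) * (Fintype.card ι - 6) + 4) := by
    rw [mul_sum, sum_congr rfl fun i' hi' =>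
        hH.esymm_four_erase_of_ne hn c (ne_of_mem_erase hi').symm,
      ← mul_sum, sum_sub_distrib, ← mul_sum, hcol, sum_const, nsmul_eq_mul, hcard]
    ring
  rw [← add_sum_erase _ _ (mem_univ i), mul_add, hH.esymm_four_erase_self, hoff]
  ring

end IsSaturatedOA

theorem sum_J4_sq_delete_one_general {R ι κ : Type*} [CommRing R] [Fintype ι] [Fintype κ]
    [DecidableEq κ] {H : Matrix ι κ R} (hH : IsSaturatedOA H)
    (hn : IsRegular (Fintype.card ι : R)) (c : κ) :
    24 * ∑ S ∈ (univ.erase c).powersetCard 4, jChar H S ^ 2 =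
      (Fintype.card ι : R) ^ 2 * (Fintype.card ι - 2) * (Fintype.card ι - 4)
        * (Fintype.card ι - 5) := by
  rw [sum_jChar_sq, mul_sum, sum_congr rfl fun i _ => hH.sum_esymm_four_erase hn c i,
    sum_const, nsmul_eq_mul, card_univ]
  ring

/-- Deleting one fixed column from a saturated `OA(n, n-1, 2, 2)`,
the sum of `J₄(S)²` over all unordered 4-subsets of the remaining `n-2` columns
equals `n²(n-2)(n-4)(n-5)/24`. -/
theorem sum_J4_sq_delete_one (n : ℕ) (hn : 8 ≤ n) (h4 : 4 ∣ n)
    (H : Fin n → Fin (n - 1) → ℤ)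
    (hpm : ∀ i j, H i j = 1 ∨ H i j = -1)
    (hbal : ∀ j, ∑ i : Fin n, H i j = 0)
    (horth : ∀ j k : Fin (n - 1), j ≠ k → ∑ i : Fin n, H i j * H i k = 0)
    (cdel : Fin (n - 1)) :
    ∑ S ∈ ((Finset.univ : Finset (Fin (n - 1))).erase cdel).powersetCard 4,
        (∑ i : Fin n, ∏ j ∈ S, H i j) ^ 2
      = (n : ℤ) ^ 2 * ((n : ℤ) - 2) * ((n : ℤ) - 4) * ((n : ℤ) - 5) / 24 := by
  have hH : IsSaturatedOA (Matrix.of H) :=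
    ⟨by simp only [Fintype.card_fin]; omega, fun i j => sq_eq_one_iff.mpr (hpm i j),
      hbal, horth⟩
  have hreg : IsRegular (Fintype.card (Fin n) : ℤ) := .of_ne_zero (by simp; omega)
  refine Int.eq_ediv_of_mul_eq_right (by norm_num) ?_
  simpa [jChar] using sum_J4_sq_delete_one_general hH hreg cdel
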